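/- arXiv:2602.08044 — 2 statements merged into one kernel-verified Lean document; each statement's English description precedes it below -/
import Mathlib

section
/- Let ν > 0, ξ > 0 and k ∈ ℕ. Then the function Φ_{ξ,k} : (0,∞) → ℝ is twice differentiable and satisfies, for every x > 0, the eigenvalue equation −Φ_{ξ,k}''(x) + ξ²x² Φ_{ξ,k}(x) + ((ν² − 1/4)/x²) Φ_{ξ,k}(x) = ξ(4k + 2(1+ν)) Φ_{ξ,k}(x). -/
open MeasureTheory Real Set

/-- Pochhammer symbol (rising factorial) `(c)_k = c (c+1) ⋯ (c+k−1)`. -/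
noncomputable def poch (c : ℝ) (k : ℕ) : ℝ := (ascPochhammer ℝ k).eval c

/-- Kummer's confluent hypergeometric function
`M(a,b,z) = ∑_{k=0}^∞ ((a)_k / ((b)_k · k!)) z^k`. -/
noncomputable def kummerM (a b z : ℝ) : ℝ :=
  ∑' k : ℕ, poch a k / (poch b k * (Nat.factorial k : ℝ)) * z ^ k

/-- Generalized Laguerre polynomial `L_k^{(ν)}(x) = ((1+ν)_k / k!) · M(−k, 1+ν, x)`. -/
noncomputable def laguerreL (ν : ℝ) (k : ℕ) (x : ℝ) : ℝ :=
  poch (1 + ν) k / (Nat.factorial k : ℝ) * kummerM (-(k : ℝ)) (1 + ν) x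

/-- The normalized eigenfunctions
`Φ_{ξ,k}(x) = √(2ξ^{1+ν}/Γ(1+ν)) √(k!/(1+ν)_k) e^{−ξx²/2} x^{1/2+ν} L_k^{(ν)}(ξx²)`. -/
noncomputable def PhiFun (ν ξ : ℝ) (k : ℕ) (x : ℝ) : ℝ :=
  Real.sqrt (2 * ξ ^ (1 + ν) / Real.Gamma (1 + ν)) *
    Real.sqrt ((Nat.factorial k : ℝ) / poch (1 + ν) k) *
    Real.exp (-ξ * x ^ 2 / 2) * x ^ ((1 : ℝ) / 2 + ν) * laguerreL ν k (ξ * x ^ 2)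

open Polynomial Topology

/-!
`Φ` is a weight `w(x) = c e^{-ξx²/2} x^{1/2+ν}` times `g(x) = f(ξx²)` with `f` a Laguerre
polynomial. Comparing coefficients shows that `f` solves `t f'' + (1 + ν - t) f' + k f = 0`. The
weight satisfies `w' = ρ w` with `ρ(x) = -ξx + (1/2 + ν)/x`, hence
`(w g)'' = w (g'' + 2 ρ g' + (ρ' + ρ²) g)`. For this choice of `ρ` the term `ρ' + ρ²` produces the
potential `ξ²x² + (ν² - 1/4)/x²` up to a constant, and in the variable `t = ξx²` the expression
`g'' + 2 ρ g'` becomes `4ξ (t f'' + (1 + ν - t) f')`, which the Laguerre equation turns into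
`-4ξk f`.
-/

/-- The coefficient of `z ^ n` in Kummer's series `M(a, b, z)`. -/
noncomputable def kummerCoeff (a b : ℝ) (n : ℕ) : ℝ :=
  poch a n / (poch b n * (n.factorial : ℝ))

theorem kummerCoeff_succ (a : ℝ) {b : ℝ} {n : ℕ} (hb : b + n ≠ 0) :
    kummerCoeff a b (n + 1) * ((b + n) * (n + 1)) = (a + n) * kummerCoeff a b n := by
  have hn : (n : ℝ) + 1 ≠ 0 := n.cast_add_one_ne_zero
  simp only [kummerCoeff, poch, ascPochhammer_succ_eval, Nat.factorial_succ, Nat.cast_mul,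
    Nat.cast_add, Nat.cast_one]
  field_simp

theorem kummerCoeff_neg_natCast_eq_zero_of_lt {k n : ℕ} (b : ℝ) (h : k < n) :
    kummerCoeff (-(k : ℝ)) b n = 0 := by
  simp [kummerCoeff, poch, ascPochhammer_eval_neg_coe_nat_of_lt h]

/-- The polynomial `M(-k, b, ·)`: Kummer's series with `a = -k`, truncated after its last
nonzero term. -/
noncomputable def kummerPoly (k : ℕ) (b : ℝ) : ℝ[X] :=
  ∑ n ∈ Finset.range (k + 1), monomial n (kummerCoeff (-(k : ℝ)) b n)

theorem coeff_kummerPoly (k : ℕ) (b : ℝ) (n : ℕ) :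
    (kummerPoly k b).coeff n = kummerCoeff (-(k : ℝ)) b n := by
  simp only [kummerPoly, finsetSum_coeff, coeff_monomial, Finset.sum_ite_eq', Finset.mem_range]
  split_ifs with h
  · rfl
  · exact (kummerCoeff_neg_natCast_eq_zero_of_lt b (by omega)).symm

theorem kummerM_neg_natCast_eq_eval_kummerPoly (k : ℕ) (b z : ℝ) :
    kummerM (-(k : ℝ)) b z = (kummerPoly k b).eval z := by
  have hsum : kummerM (-(k : ℝ)) b z =
      ∑ n ∈ Finset.range (k + 1), kummerCoeff (-(k : ℝ)) b n * z ^ n :=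
    tsum_eq_sum fun n hn => mul_eq_zero_of_left
      (kummerCoeff_neg_natCast_eq_zero_of_lt b (by simpa using hn)) _
  simp [hsum, kummerPoly, eval_finsetSum]

theorem kummerPoly_ode (k : ℕ) {b : ℝ} (hb : ∀ n : ℕ, b + n ≠ 0) :
    X * derivative (derivative (kummerPoly k b)) + C b * derivative (kummerPoly k b)
      - X * derivative (kummerPoly k b) + C (k : ℝ) * kummerPoly k b = 0 := by
  ext n
  have hrec := kummerCoeff_succ (-(k : ℝ)) (hb n)
  cases n with
  | zero =>
    simp only [coeff_add, coeff_sub, coeff_C_mul, coeff_X_mul_zero, coeff_derivative,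
      coeff_kummerPoly, coeff_zero]
    push_cast at hrec ⊢
    linear_combination hrec
  | succ n =>
    simp only [coeff_add, coeff_sub, coeff_C_mul, coeff_X_mul, coeff_derivative,
      coeff_kummerPoly, coeff_zero]
    push_cast at hrec ⊢
    linear_combination hrec

/-- The generalized Laguerre polynomial `L_k^{(ν)}` as an element of `ℝ[X]`, so that its
derivatives are available algebraically. -/
noncomputable def laguerrePoly (ν : ℝ) (k : ℕ) : ℝ[X] :=
  C (poch (1 + ν) k / (k.factorial : ℝ)) * kummerPoly k (1 + ν)

theorem laguerreL_eq_eval_laguerrePoly (ν : ℝ) (k : ℕ) :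
    laguerreL ν k = fun x => (laguerrePoly ν k).eval x := by
  funext x
  simp [laguerreL, laguerrePoly, kummerM_neg_natCast_eq_eval_kummerPoly]

theorem laguerrePoly_ode {ν : ℝ} (k : ℕ) (hν : ∀ n : ℕ, 1 + ν + n ≠ 0) (t : ℝ) :
    t * (derivative (derivative (laguerrePoly ν k))).eval t
      + (1 + ν - t) * (derivative (laguerrePoly ν k)).eval t
      + k * (laguerrePoly ν k).eval t = 0 := by
  have hkummer := congrArg (eval t) (kummerPoly_ode k hν)
  simp only [eval_add, eval_sub, eval_mul, eval_X, eval_C, eval_zero] at hkummer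
  simp only [laguerrePoly, derivative_C_mul, eval_mul, eval_C]
  linear_combination (poch (1 + ν) k / (k.factorial : ℝ)) * hkummer

theorem hasDerivAt_mul_of_logDeriv {w g : ℝ → ℝ} {r g' x : ℝ} (hw : HasDerivAt w (r * w x) x)
    (hg : HasDerivAt g g' x) :
    HasDerivAt (fun y => w y * g y) (w x * (g' + r * g x)) x :=
  (hw.fun_mul hg).congr_deriv (by ring)

theorem hasDerivAt_deriv_mul_of_logDeriv {w ρ g g' : ℝ → ℝ} {ρ' g'' x : ℝ}
    (hw : ∀ᶠ y in 𝓝 x, HasDerivAt w (ρ y * w y) y) (hρ : HasDerivAt ρ ρ' x)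
    (hg : ∀ᶠ y in 𝓝 x, HasDerivAt g (g' y) y) (hg' : HasDerivAt g' g'' x) :
    HasDerivAt (deriv fun y => w y * g y)
      (w x * (g'' + 2 * ρ x * g' x + (ρ' + ρ x ^ 2) * g x)) x := by
  have hderiv : deriv (fun y => w y * g y) =ᶠ[𝓝 x] fun y => w y * (g' y + ρ y * g y) := by
    filter_upwards [hw, hg] with y hwy hgy
    exact (hasDerivAt_mul_of_logDeriv hwy hgy).deriv
  have hinner : HasDerivAt (fun y => g' y + ρ y * g y) (g'' + (ρ' * g x + ρ x * g' x)) x :=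
    hg'.fun_add (hρ.fun_mul hg.self_of_nhds)
  exact ((hasDerivAt_mul_of_logDeriv hw.self_of_nhds hinner).congr_of_eventuallyEq
    hderiv).congr_deriv (by ring)

/-- The weight `c e^{-ξx²/2} x^s`. The factor `c` is carried along so that normalization constants
can be absorbed into it. -/
noncomputable def gaussianRpow (c ξ s x : ℝ) : ℝ :=
  c * exp (-ξ * x ^ 2 / 2) * x ^ s

theorem hasDerivAt_gaussianRpow (c ξ s : ℝ) {x : ℝ} (hx : x ≠ 0) :
    HasDerivAt (gaussianRpow c ξ s) ((-ξ * x + s / x) * gaussianRpow c ξ s x) x := by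
  have hquad : HasDerivAt (fun y : ℝ => -ξ * y ^ 2 / 2) (-ξ * x) x :=
    (((hasDerivAt_pow 2 x).const_mul (-ξ)).div_const 2).congr_deriv (by push_cast; ring)
  have hrpow : HasDerivAt (fun y : ℝ => y ^ s) (s * (x ^ s / x)) x :=
    (hasDerivAt_rpow_const (Or.inl hx)).congr_deriv (by rw [rpow_sub_one hx])
  exact ((hquad.exp.const_mul c).fun_mul hrpow).congr_deriv (by unfold gaussianRpow; ring)

theorem hasDerivAt_logDeriv_gaussianRpow (ξ s : ℝ) {x : ℝ} (hx : x ≠ 0) :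
    HasDerivAt (fun y : ℝ => -ξ * y + s / y) (-ξ - s / x ^ 2) x :=
  (((hasDerivAt_id x).const_mul (-ξ)).fun_add ((hasDerivAt_inv hx).const_mul s)).congr_deriv
    (by ring)

theorem hasDerivAt_comp_mul_sq {f : ℝ → ℝ} {f' ξ x : ℝ} (hf : HasDerivAt f f' (ξ * x ^ 2)) :
    HasDerivAt (fun y => f (ξ * y ^ 2)) (2 * ξ * x * f') x := by
  have hsq : HasDerivAt (fun y : ℝ => ξ * y ^ 2) (2 * ξ * x) x :=
    ((hasDerivAt_pow 2 x).const_mul ξ).congr_deriv (by push_cast; ring)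
  exact (hf.comp x hsq).congr_deriv (mul_comm _ _)

theorem hasDerivAt_mul_comp_mul_sq {f : ℝ → ℝ} {f' ξ x : ℝ} (hf : HasDerivAt f f' (ξ * x ^ 2)) :
    HasDerivAt (fun y => 2 * ξ * y * f (ξ * y ^ 2))
      (2 * ξ * f (ξ * x ^ 2) + 4 * ξ * (ξ * x ^ 2) * f') x :=
  (((hasDerivAt_id x).const_mul (2 * ξ)).fun_mul (hasDerivAt_comp_mul_sq hf)).congr_deriv
    (by simp only [id_eq]; ring)

theorem hasDerivAt_deriv_gaussianRpow_mul_of_laguerre_ode (c : ℝ) {ν ξ κ x f'' : ℝ}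
    {f f' : ℝ → ℝ} (hx : x ≠ 0) (hf : ∀ᶠ t in 𝓝 (ξ * x ^ 2), HasDerivAt f (f' t) t)
    (hf' : HasDerivAt f' f'' (ξ * x ^ 2))
    (hode : ξ * x ^ 2 * f'' + (1 + ν - ξ * x ^ 2) * f' (ξ * x ^ 2) + κ * f (ξ * x ^ 2) = 0) :
    HasDerivAt (deriv fun y => gaussianRpow c ξ (1 / 2 + ν) y * f (ξ * y ^ 2))
      ((ξ ^ 2 * x ^ 2 + (ν ^ 2 - 1 / 4) / x ^ 2 - ξ * (4 * κ + 2 * (1 + ν)))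
        * (gaussianRpow c ξ (1 / 2 + ν) x * f (ξ * x ^ 2))) x := by
  have hw : ∀ᶠ y in 𝓝 x, HasDerivAt (gaussianRpow c ξ (1 / 2 + ν))
      ((-ξ * y + (1 / 2 + ν) / y) * gaussianRpow c ξ (1 / 2 + ν) y) y :=
    (eventually_ne_nhds hx).mono fun _ => hasDerivAt_gaussianRpow c ξ (1 / 2 + ν)
  have hsq : Filter.Tendsto (fun y : ℝ => ξ * y ^ 2) (𝓝 x) (𝓝 (ξ * x ^ 2)) :=
    Continuous.tendsto (by fun_prop) x
  have hg := (hsq.eventually hf).mono fun _ => hasDerivAt_comp_mul_sq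
  have hdrift : (-ξ * x + (1 / 2 + ν) / x) * x = 1 / 2 + ν - ξ * x ^ 2 := by
    field_simp
    ring
  have hpotential : -ξ - (1 / 2 + ν) / x ^ 2 + (-ξ * x + (1 / 2 + ν) / x) ^ 2
      = ξ ^ 2 * x ^ 2 + (ν ^ 2 - 1 / 4) / x ^ 2 - 2 * ξ * (1 + ν) := by
    field_simp
    ring
  refine (hasDerivAt_deriv_mul_of_logDeriv hw (hasDerivAt_logDeriv_gaussianRpow ξ (1 / 2 + ν) hx)
    hg (hasDerivAt_mul_comp_mul_sq hf')).congr_deriv ?_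
  linear_combination gaussianRpow c ξ (1 / 2 + ν) x *
    (4 * ξ * hode + 4 * ξ * f' (ξ * x ^ 2) * hdrift + f (ξ * x ^ 2) * hpotential)

/-- The function `Φ_{ξ,k}` with an arbitrary constant `c` in place of its normalization. -/
noncomputable def laguerreMode (c ν ξ : ℝ) (k : ℕ) (x : ℝ) : ℝ :=
  gaussianRpow c ξ (1 / 2 + ν) x * laguerreL ν k (ξ * x ^ 2)

theorem differentiableAt_laguerreMode (c ν ξ : ℝ) (k : ℕ) {x : ℝ} (hx : x ≠ 0) :
    DifferentiableAt ℝ (laguerreMode c ν ξ k) x := by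
  unfold laguerreMode
  rw [laguerreL_eq_eval_laguerrePoly]
  exact (hasDerivAt_mul_of_logDeriv (hasDerivAt_gaussianRpow c ξ (1 / 2 + ν) hx)
    (hasDerivAt_comp_mul_sq ((laguerrePoly ν k).hasDerivAt _))).differentiableAt

theorem hasDerivAt_deriv_laguerreMode (c : ℝ) {ν : ℝ} (ξ : ℝ) (k : ℕ) {x : ℝ}
    (hν : ∀ n : ℕ, 1 + ν + n ≠ 0) (hx : x ≠ 0) :
    HasDerivAt (deriv (laguerreMode c ν ξ k))
      ((ξ ^ 2 * x ^ 2 + (ν ^ 2 - 1 / 4) / x ^ 2 - ξ * (4 * k + 2 * (1 + ν)))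
        * laguerreMode c ν ξ k x) x := by
  unfold laguerreMode
  rw [laguerreL_eq_eval_laguerrePoly]
  exact hasDerivAt_deriv_gaussianRpow_mul_of_laguerre_ode c hx
    (.of_forall (laguerrePoly ν k).hasDerivAt) ((derivative (laguerrePoly ν k)).hasDerivAt _)
    (laguerrePoly_ode k hν _)

theorem phi_is_eigenfunction_general (c ν ξ : ℝ) (k : ℕ) (hν : ∀ n : ℕ, 1 + ν + n ≠ 0) :
    (∀ x : ℝ, 0 < x → DifferentiableAt ℝ (laguerreMode c ν ξ k) x) ∧
    (∀ x : ℝ, 0 < x → DifferentiableAt ℝ (deriv (laguerreMode c ν ξ k)) x) ∧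
    (∀ x : ℝ, 0 < x →
      -deriv (deriv (laguerreMode c ν ξ k)) x + ξ ^ 2 * x ^ 2 * laguerreMode c ν ξ k x
          + ((ν ^ 2 - 1 / 4) / x ^ 2) * laguerreMode c ν ξ k x
        = ξ * (4 * (k : ℝ) + 2 * (1 + ν)) * laguerreMode c ν ξ k x) := by
  refine ⟨fun x hx => differentiableAt_laguerreMode c ν ξ k hx.ne',
    fun x hx => (hasDerivAt_deriv_laguerreMode c ξ k hν hx.ne').differentiableAt, fun x hx => ?_⟩
  rw [(hasDerivAt_deriv_laguerreMode c ξ k hν hx.ne').deriv]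
  ring

/-- For `ν > 0`, `ξ > 0`, `k ∈ ℕ`, the function `Φ_{ξ,k}` is twice differentiable on
`(0,∞)` and satisfies `−Φ'' + ξ²x²Φ + ((ν²−1/4)/x²)Φ = ξ(4k + 2(1+ν))Φ` for `x > 0`. -/
theorem phi_is_eigenfunction (ν ξ : ℝ) (k : ℕ) (hν : 0 < ν) (hξ : 0 < ξ) :
    (∀ x : ℝ, 0 < x → DifferentiableAt ℝ (PhiFun ν ξ k) x) ∧
    (∀ x : ℝ, 0 < x → DifferentiableAt ℝ (deriv (PhiFun ν ξ k)) x) ∧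
    (∀ x : ℝ, 0 < x →
      -deriv (deriv (PhiFun ν ξ k)) x + ξ ^ 2 * x ^ 2 * PhiFun ν ξ k x
          + ((ν ^ 2 - 1 / 4) / x ^ 2) * PhiFun ν ξ k x
        = ξ * (4 * (k : ℝ) + 2 * (1 + ν)) * PhiFun ν ξ k x) :=
  phi_is_eigenfunction_general _ ν ξ k fun n => by positivity
end

section
/- Let ν > 0, ξ > 0, t > 0 and x, x' > 0. Then the series Σ_{k=0}^∞ e^{−ξ(4k+2(1+ν))t} Φ_{ξ,k}(x) Φ_{ξ,k}(x') converges and its sum equals (ξ√(xx')/sinh(2ξt)) · I_ν( ξ x x' / sinh(2ξt) ) · exp( −(ξ/2)(x² + x'²) coth(2ξt) ). -/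
open MeasureTheory Real Set

/-- Modified Bessel function `I_ν(z) = ∑_{m=0}^∞ (z/2)^{2m+ν} / (m! Γ(m+ν+1))`. -/
noncomputable def besselI (ν z : ℝ) : ℝ :=
  ∑' m : ℕ, (z / 2) ^ (2 * (m : ℝ) + ν) / ((Nat.factorial m : ℝ) * Real.Gamma ((m : ℝ) + ν + 1))

/-!
The formula is the Hille–Hardy identity for Laguerre polynomials at `r = e^{-4ξt}`. It follows from
two generating functions of the terminating Kummer series,
`∑_k (a+j)_k/k! r^k M(-k-j, a, x) = (1-r)^{-a-j} e^{-xr/(1-r)} M(-j, a, x/(1-r))` and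
`∑_k z^k/k! M(-k, a, x) = e^z ₀F₁(a; -xz)`.
Expanding `M(-k, a, y)` in powers of `y` and summing over `k` with the first one turns the bilinear
series into an instance of the second. The first is proved by induction on `j`: the contiguous
relation `M(-k-1, a, x) = M(-k, a, x) - (x/a) M(-k, a+1, x)` and Pascal's rule for the binomial
series give two linear relations between the sums for `j` and for `j + 1`.
-/

open scoped Nat

section Pochhammer

lemma poch_zero (c : ℝ) : poch c 0 = 1 := by simp [poch]

lemma poch_succ (c : ℝ) (n : ℕ) : poch c (n + 1) = poch c n * (c + n) :=
  ascPochhammer_succ_eval n c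

lemma poch_pos {c : ℝ} (hc : 0 < c) (n : ℕ) : 0 < poch c n := ascPochhammer_pos n c hc

lemma poch_add (c : ℝ) (m n : ℕ) : poch c (m + n) = poch c m * poch (c + m) n := by
  simp [poch, ← ascPochhammer_mul]

lemma poch_succ_left (c : ℝ) (n : ℕ) : poch c (n + 1) = c * poch (c + 1) n := by
  simpa [poch_succ, poch_zero, add_comm] using poch_add c 1 n

lemma factorial_le_poch {c : ℝ} (hc : 1 ≤ c) (n : ℕ) : (n ! : ℝ) ≤ poch c n := by
  induction n with
  | zero => simp [poch_zero]
  | succ n ih =>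
    rw [poch_succ, Nat.factorial_succ, mul_comm]
    push_cast
    exact mul_le_mul ih (by linarith) (by positivity) (poch_pos (by linarith) n).le

lemma poch_neg_natCast (k i : ℕ) : poch (-(k : ℝ)) i = (-1) ^ i * i ! * k.choose i := by
  rw [poch, ascPochhammer_eval_neg_eq_descPochhammer, descPochhammer_eval_eq_descFactorial,
    Nat.descFactorial_eq_factorial_mul_choose]
  push_cast
  ring

lemma Gamma_add_natCast {a : ℝ} (ha : 0 < a) (m : ℕ) : Gamma (a + m) = Gamma a * poch a m := by
  induction m with
  | zero => simp [poch_zero]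
  | succ m ih =>
    push_cast
    rw [← add_assoc, Gamma_add_one (by positivity), ih, poch_succ]
    ring

lemma summable_pow_div_poch {a : ℝ} (ha : 0 < a) (z : ℝ) :
    Summable fun i : ℕ => z ^ i / poch a i := by
  have hshift : Summable fun i : ℕ => z ^ i / poch (a + 1) i := by
    refine .of_norm_bounded (Real.summable_pow_div_factorial |z|) fun i => ?_
    have hfac := factorial_le_poch (show 1 ≤ a + 1 by linarith) i
    rw [norm_div, norm_pow, norm_eq_abs, norm_of_nonneg (poch_pos (by linarith) i).le]
    gcongr
  refine (summable_nat_add_iff 1).1 ((hshift.mul_left (z / a)).congr fun i => ?_)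
  rw [poch_succ_left, pow_succ']
  ring

end Pochhammer

section ChooseSums

lemma hasSum_mul_choose_iff {f : ℕ → ℝ} {S : ℝ} (p : ℕ) :
    HasSum (fun k => f k * k.choose p) S ↔
      HasSum (fun n => f (n + p) * (n + p).choose p) S := by
  refine ((add_left_injective p).hasSum_iff fun k hk => ?_).symm
  have hlt : k < p := by
    by_contra! hle
    exact hk ⟨k - p, Nat.sub_add_cancel hle⟩
  simp [Nat.choose_eq_zero_of_lt hlt]

lemma inv_factorial_mul_choose (n p : ℕ) :
    ((n + p)! : ℝ)⁻¹ * (n + p).choose p = (p ! : ℝ)⁻¹ * (n ! : ℝ)⁻¹ := by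
  rw [Nat.cast_choose ℝ (Nat.le_add_left p n), Nat.add_sub_cancel]
  field_simp

lemma poch_div_factorial_mul_choose (a : ℝ) (n p : ℕ) :
    poch a (n + p) / (n + p)! * (n + p).choose p =
      poch a p / p ! * (poch (a + p) n / n !) := by
  rw [div_eq_mul_inv, mul_assoc, inv_factorial_mul_choose, add_comm n p, poch_add]
  ring

lemma choose_mul_pow_le {e : ℝ} (he : 0 ≤ e) (k i : ℕ) :
    (k.choose i : ℝ) * e ^ i ≤ (1 + e) ^ k := by
  rcases le_or_gt i k with hik | hki
  · rw [add_comm 1 e, add_pow]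
    simpa [mul_comm] using
      Finset.single_le_sum (f := fun m => e ^ m * 1 ^ (k - m) * (k.choose m : ℝ))
        (fun m _ => by positivity) (Finset.mem_range_succ_iff.2 hik)
  · rw [Nat.choose_eq_zero_of_lt hki, Nat.cast_zero, zero_mul]
    positivity

lemma hasSum_pow_div_factorial (z : ℝ) : HasSum (fun n : ℕ => z ^ n / n !) (exp z) := by
  rw [exp_eq_exp_ℝ]
  exact NormedSpace.expSeries_div_hasSum_exp z

lemma hasSum_pow_div_factorial_mul_choose (z : ℝ) (p : ℕ) :
    HasSum (fun k : ℕ => z ^ k / k ! * k.choose p) (z ^ p / p ! * exp z) := by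
  refine (hasSum_mul_choose_iff p).2
    (((hasSum_pow_div_factorial z).mul_left (z ^ p / p !)).congr_fun fun n => ?_)
  rw [div_eq_mul_inv (z ^ (n + p)), mul_assoc, inv_factorial_mul_choose]
  ring

lemma hasSum_poch_div_factorial_mul_pow (b : ℝ) {r : ℝ} (hr : |r| < 1) :
    HasSum (fun n : ℕ => poch b n / n ! * r ^ n) ((1 - r) ^ (-b)) := by
  have hball : r ∈ Metric.eball (0 : ℝ) 1 := by
    simpa [enorm_eq_nnnorm, ← NNReal.coe_lt_coe] using hr
  have h := (one_div_one_sub_rpow_hasFPowerSeriesOnBall_zero b).hasSum hball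
  rw [zero_add, one_div, ← rpow_neg (by linarith [abs_lt.1 hr])] at h
  refine h.congr_fun fun n => ?_
  have hpoch := Ring.factorial_nsmul_multichoose_eq_ascPochhammer b n
  rw [Polynomial.ascPochhammer_smeval_eq_eval, nsmul_eq_mul] at hpoch
  rw [FormalMultilinearSeries.ofScalars_apply_eq, ← Ring.multichoose_eq, smul_eq_mul, poch,
    ← hpoch]
  field_simp

lemma hasSum_poch_div_factorial_mul_pow_mul_choose (a : ℝ) {r : ℝ} (hr : |r| < 1) (p : ℕ) :
    HasSum (fun k : ℕ => poch a k / k ! * r ^ k * k.choose p)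
      (poch a p / p ! * r ^ p * (1 - r) ^ (-(a + p))) := by
  refine (hasSum_mul_choose_iff p).2
    (((hasSum_poch_div_factorial_mul_pow (a + p) hr).mul_left _).congr_fun fun n => ?_)
  rw [mul_right_comm, poch_div_factorial_mul_choose]
  ring

end ChooseSums

/-- The generating function `∑ c_k z^k` has radius of convergence greater than one. This is the
condition on `c` under which `∑ c_k M(-k, a, x)` may be expanded in powers of `x`, since
`M(-k, a, x) = O(ρ^k)` for every `ρ > 1`. -/
def SummablePastOne (c : ℕ → ℝ) : Prop :=
  ∃ ρ > 1, Summable fun k => |c k| * ρ ^ k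

lemma summablePastOne_poch_div_factorial_mul_pow (b : ℝ) {r : ℝ} (hr : |r| < 1) :
    SummablePastOne fun k => poch b k / k ! * r ^ k := by
  obtain ⟨q, hrq, hq⟩ := exists_between hr
  have hq0 : 0 < q := (abs_nonneg r).trans_lt hrq
  have hrq' : |r / q| < 1 := by rwa [abs_div, abs_of_pos hq0, div_lt_one hq0]
  refine ⟨q⁻¹, (one_lt_inv₀ hq0).2 hq,
    (hasSum_poch_div_factorial_mul_pow b hrq').summable.abs.congr fun k => ?_⟩
  rw [div_pow, ← mul_div_assoc, abs_div, abs_of_pos (pow_pos hq0 k), inv_pow, div_eq_mul_inv]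

lemma summablePastOne_pow_div_factorial (z : ℝ) : SummablePastOne fun k => z ^ k / k ! := by
  refine ⟨2, one_lt_two, (Real.summable_pow_div_factorial (|z| * 2)).congr fun k => ?_⟩
  rw [abs_div, abs_pow, Nat.abs_cast, mul_pow]
  ring

section TerminatingKummer

lemma hasSum_kummerM_neg_natCast (k : ℕ) (a x : ℝ) :
    HasSum (fun i : ℕ => (k.choose i : ℝ) * ((-x) ^ i / poch a i)) (kummerM (-(k : ℝ)) a x) := by
  have hterm (i : ℕ) : poch (-(k : ℝ)) i / (poch a i * i !) * x ^ i =
      k.choose i * ((-x) ^ i / poch a i) := by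
    rw [poch_neg_natCast, neg_pow x]
    field_simp
  simp only [kummerM, hterm]
  refine (summable_of_ne_finset_zero (s := Finset.range (k + 1)) fun i hi => ?_).hasSum
  rw [Nat.choose_eq_zero_of_lt (by simpa using hi), Nat.cast_zero, zero_mul]

lemma kummerM_zero_left (a x : ℝ) : kummerM 0 a x = 1 := by
  rw [kummerM, tsum_eq_single 0 fun k hk => by simp [poch, hk]]
  simp [poch_zero]

lemma kummerM_neg_natCast_succ (k : ℕ) (a x : ℝ) :
    kummerM (-((k + 1 : ℕ) : ℝ)) a x =
      kummerM (-(k : ℝ)) a x - x / a * kummerM (-(k : ℝ)) (a + 1) x := by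
  have hdiff := (hasSum_kummerM_neg_natCast (k + 1) a x).sub (hasSum_kummerM_neg_natCast k a x)
  have hshift := (hasSum_nat_add_iff' 1).2 hdiff
  have hpascal : HasSum _ (-(x / a) * kummerM (-(k : ℝ)) (a + 1) x) :=
    (hasSum_kummerM_neg_natCast k (a + 1) x).mul_left (-(x / a))
  have := hshift.unique (hpascal.congr_fun fun i => by
    rw [Nat.choose_succ_succ, poch_succ_left, pow_succ']
    push_cast
    ring)
  simp only [Finset.sum_range_one, Nat.choose_zero_right, sub_self, sub_zero] at this
  linarith

lemma exists_abs_kummerM_neg_natCast_le {a ρ : ℝ} (ha : 0 < a) (hρ : 1 < ρ) (x : ℝ) :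
    ∃ K, ∀ k : ℕ, |kummerM (-(k : ℝ)) a x| ≤ K * ρ ^ k := by
  have hρ' : 0 < ρ - 1 := sub_pos.2 hρ
  refine ⟨∑' i : ℕ, (|x| / (ρ - 1)) ^ i / poch a i, fun k => ?_⟩
  have hmajorant := (summable_pow_div_poch ha (|x| / (ρ - 1))).hasSum.mul_right (ρ ^ k)
  refine (hasSum_kummerM_neg_natCast k a x).norm_le_of_bounded hmajorant fun i => ?_
  have hchoose : (k.choose i : ℝ) ≤ ρ ^ k / (ρ - 1) ^ i := by
    rw [le_div_iff₀ (by positivity)]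
    simpa using choose_mul_pow_le hρ'.le k i
  have hpoch := poch_pos ha i
  calc ‖(k.choose i : ℝ) * ((-x) ^ i / poch a i)‖
      = k.choose i * (|x| ^ i / poch a i) := by simp [abs_of_pos hpoch]
    _ ≤ ρ ^ k / (ρ - 1) ^ i * (|x| ^ i / poch a i) := by gcongr
    _ = (|x| / (ρ - 1)) ^ i / poch a i * ρ ^ k := by rw [div_pow]; ring

variable {a : ℝ} {c : ℕ → ℝ}

lemma SummablePastOne.mul_kummerM (hc : SummablePastOne c) (ha : 0 < a) (x : ℝ) :
    SummablePastOne fun k => c k * kummerM (-(k : ℝ)) a x := by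
  obtain ⟨ρ, hρ, hsum⟩ := hc
  have hsqrt : 1 < √ρ := lt_sqrt_of_sq_lt (by simpa using hρ)
  obtain ⟨K, hK⟩ := exists_abs_kummerM_neg_natCast_le ha hsqrt x
  refine ⟨√ρ, hsqrt, .of_nonneg_of_le (fun k => by positivity) (fun k => ?_) (hsum.mul_left K)⟩
  calc |c k * kummerM (-(k : ℝ)) a x| * √ρ ^ k
      = |c k| * |kummerM (-(k : ℝ)) a x| * √ρ ^ k := by rw [abs_mul]
    _ ≤ |c k| * (K * √ρ ^ k) * √ρ ^ k := by gcongr; exact hK k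
    _ = K * (|c k| * (√ρ * √ρ) ^ k) := by rw [mul_pow]; ring
    _ = K * (|c k| * ρ ^ k) := by rw [mul_self_sqrt (by linarith)]

lemma SummablePastOne.summable_mul_kummerM_add (hc : SummablePastOne c) (ha : 0 < a) (x : ℝ)
    (j : ℕ) : Summable fun n => c n * kummerM (-((n + j : ℕ) : ℝ)) a x := by
  obtain ⟨ρ, hρ, hsum⟩ := hc
  obtain ⟨K, hK⟩ := exists_abs_kummerM_neg_natCast_le ha hρ x
  refine .of_norm_bounded (hsum.mul_left (K * ρ ^ j)) fun n => ?_
  calc ‖c n * kummerM (-((n + j : ℕ) : ℝ)) a x‖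
      = |c n| * |kummerM (-((n + j : ℕ) : ℝ)) a x| := by rw [norm_eq_abs, abs_mul]
    _ ≤ |c n| * (K * ρ ^ (n + j)) := by gcongr; exact hK (n + j)
    _ = K * ρ ^ j * (|c n| * ρ ^ n) := by rw [pow_add]; ring

lemma SummablePastOne.summable_prod_choose (hc : SummablePastOne c) (ha : 0 < a) (x : ℝ) :
    Summable fun p : ℕ × ℕ => c p.1 * ((p.1.choose p.2 : ℝ) * ((-x) ^ p.2 / poch a p.2)) := by
  have hnorm (k i : ℕ) : ‖c k * ((k.choose i : ℝ) * ((-x) ^ i / poch a i))‖ =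
      |c k| * (k.choose i * ((-(-|x|)) ^ i / poch a i)) := by
    simp [abs_of_pos (poch_pos ha i)]
  have hrow (k : ℕ) := (hasSum_kummerM_neg_natCast k a (-|x|)).mul_left |c k|
  refine .of_norm ((summable_prod_of_nonneg fun _ => norm_nonneg _).2 ⟨fun k => ?_, ?_⟩)
  · simpa only [hnorm] using (hrow k).summable
  · simp only [hnorm, (hrow _).tsum_eq]
    have hsum := (hc.summable_mul_kummerM_add ha (-|x|) 0).norm
    exact .of_norm (by simpa [abs_mul] using hsum)

lemma SummablePastOne.hasSum_mul_kummerM {g : ℕ → ℝ} (hc : SummablePastOne c) (ha : 0 < a) (x : ℝ)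
    (hg : ∀ i, HasSum (fun k => c k * (k.choose i : ℝ)) (g i)) :
    HasSum (fun k => c k * kummerM (-(k : ℝ)) a x) (∑' i, (-x) ^ i / poch a i * g i) := by
  have hprod := hc.summable_prod_choose ha x
  have hrow := hprod.hasSum.prod_fiberwise fun k =>
    (hasSum_kummerM_neg_natCast k a x).mul_left (c k)
  have hcol := ((Equiv.prodComm ℕ ℕ).hasSum_iff.2 hprod.hasSum).prod_fiberwise
    (g := fun i => (-x) ^ i / poch a i * g i) fun i =>
      ((hg i).mul_left ((-x) ^ i / poch a i)).congr_fun fun k => by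
        simp only [Function.comp_apply, Equiv.prodComm_apply, Prod.swap_prod_mk]
        ring
  rwa [hcol.tsum_eq]

end TerminatingKummer

/-- The confluent hypergeometric limit function `₀F₁(a; z)`. It expresses sums over the Bessel
series without powers of real exponent: `I_ν(z)` is a multiple of `z^ν ₀F₁(1+ν; z²/4)`. -/
noncomputable def hyp0F1 (a z : ℝ) : ℝ := ∑' m : ℕ, z ^ m / (m ! * poch a m)

section GeneratingFunctions

variable {a r : ℝ}

lemma hasSum_pow_div_factorial_mul_kummerM (ha : 0 < a) (z x : ℝ) :
    HasSum (fun k : ℕ => z ^ k / k ! * kummerM (-(k : ℝ)) a x)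
      (exp z * hyp0F1 a (-(x * z))) := by
  have h := (summablePastOne_pow_div_factorial z).hasSum_mul_kummerM ha x
    (hasSum_pow_div_factorial_mul_choose z)
  rw [hyp0F1, ← tsum_mul_left]
  convert! h using 3 with i
  rw [← neg_mul, mul_pow]
  field_simp

lemma hasSum_poch_mul_pow_mul_kummerM (ha : 0 < a) (hr : |r| < 1) (x : ℝ) :
    HasSum (fun k : ℕ => poch a k / k ! * r ^ k * kummerM (-(k : ℝ)) a x)
      ((1 - r) ^ (-a) * exp (-(x * r / (1 - r)))) := by
  have hr1 : 0 < 1 - r := by linarith [abs_lt.1 hr]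
  have h := (summablePastOne_poch_div_factorial_mul_pow a hr).hasSum_mul_kummerM ha x
    (hasSum_poch_div_factorial_mul_pow_mul_choose a hr)
  rw [← (hasSum_pow_div_factorial (-(x * r / (1 - r)))).tsum_eq, ← tsum_mul_left]
  convert! h using 3 with i
  have hpoch := (poch_pos ha i).ne'
  rw [neg_add, rpow_add hr1, rpow_neg hr1.le (i : ℝ), rpow_natCast, ← neg_div, div_pow, ← neg_mul,
    mul_pow]
  field_simp

lemma poch_add_one_div_factorial_mul_pow_succ (b r : ℝ) (n : ℕ) :
    poch (b + 1) (n + 1) / (n + 1)! * r ^ (n + 1) =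
      poch b (n + 1) / (n + 1)! * r ^ (n + 1) + r * (poch (b + 1) n / n ! * r ^ n) := by
  rw [poch_succ, poch_succ_left b, Nat.factorial_succ]
  push_cast
  field_simp
  ring

/-- Pascal's rule for the weights relates the left-hand sides for `j` and `j + 1` to the same sum
`∑ (a+j+1)_n/n! r^n M(-n-j, a, x)`, which the contiguous relation evaluates. -/
lemma one_sub_mul_eq_of_hasSum_kummerM {b x F F' G : ℝ} (j : ℕ)
    (hF : HasSum (fun n : ℕ => poch b n / n ! * r ^ n * kummerM (-((n + j : ℕ) : ℝ)) a x) F)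
    (hF' : HasSum (fun n : ℕ =>
      poch (b + 1) n / n ! * r ^ n * kummerM (-((n + j : ℕ) : ℝ)) (a + 1) x) F')
    (hG : HasSum (fun n : ℕ =>
      poch (b + 1) n / n ! * r ^ n * kummerM (-((n + (j + 1) : ℕ) : ℝ)) a x) G) :
    (1 - r) * G = F - x / a * F' := by
  have hcontig : HasSum (fun n : ℕ =>
      poch (b + 1) n / n ! * r ^ n * kummerM (-((n + j : ℕ) : ℝ)) a x) (G + x / a * F') :=
    (hG.add (hF'.mul_left (x / a))).congr_fun fun n => by
      rw [← add_assoc n j 1, kummerM_neg_natCast_succ]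
      ring
  have hpascal := (hasSum_nat_add_iff' 1).2 (hcontig.sub hF)
  have := hpascal.unique ((hG.mul_left r).congr_fun fun n => by
    rw [poch_add_one_div_factorial_mul_pow_succ, add_right_comm n 1 j, ← add_assoc n j 1]
    ring)
  simp only [Finset.sum_range_one, poch_zero, sub_self, sub_zero] at this
  linarith

lemma hasSum_poch_mul_pow_mul_kummerM_add (hr : |r| < 1) (x : ℝ) (j : ℕ) (ha : 0 < a) :
    HasSum (fun n : ℕ => poch (a + j) n / n ! * r ^ n * kummerM (-((n + j : ℕ) : ℝ)) a x)
      ((1 - r) ^ (-(a + j)) * exp (-(x * r / (1 - r))) * kummerM (-(j : ℝ)) a (x / (1 - r))) := by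
  have hr1 : 0 < 1 - r := by linarith [abs_lt.1 hr]
  induction j generalizing a with
  | zero => simpa [kummerM_zero_left] using hasSum_poch_mul_pow_mul_kummerM ha hr x
  | succ j ih =>
    have hF' := ih (a := a + 1) (by positivity)
    have hG := ((summablePastOne_poch_div_factorial_mul_pow (a + j + 1) hr).summable_mul_kummerM_add
      ha x (j + 1)).hasSum
    rw [add_right_comm a 1] at hF'
    have hrec := one_sub_mul_eq_of_hasSum_kummerM j (ih ha) hF' hG
    rw [Nat.cast_succ, ← add_assoc, ← Nat.cast_succ]
    convert! hG using 1
    rw [← mul_right_inj' hr1.ne', hrec, kummerM_neg_natCast_succ, neg_add _ 1,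
      rpow_add hr1, rpow_neg_one]
    field_simp

lemma hasSum_poch_mul_pow_mul_kummerM_mul_choose (ha : 0 < a) (hr : |r| < 1) (x : ℝ) (j : ℕ) :
    HasSum (fun k : ℕ => poch a k / k ! * r ^ k * kummerM (-(k : ℝ)) a x * k.choose j)
      (poch a j / j ! * r ^ j * ((1 - r) ^ (-(a + j)) * exp (-(x * r / (1 - r))) *
        kummerM (-(j : ℝ)) a (x / (1 - r)))) := by
  refine (hasSum_mul_choose_iff j).2
    (((hasSum_poch_mul_pow_mul_kummerM_add hr x j ha).mul_left _).congr_fun fun n => ?_)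
  rw [mul_right_comm, mul_right_comm (poch a (n + j) / _), poch_div_factorial_mul_choose]
  ring

lemma hasSum_poch_mul_pow_mul_kummerM_mul_kummerM (ha : 0 < a) (hr : |r| < 1) (x y : ℝ) :
    HasSum (fun k : ℕ =>
        poch a k / k ! * r ^ k * kummerM (-(k : ℝ)) a x * kummerM (-(k : ℝ)) a y)
      ((1 - r) ^ (-a) * exp (-((x + y) * r / (1 - r))) *
        hyp0F1 a (x * y * r / (1 - r) ^ 2)) := by
  have hr1 : 0 < 1 - r := by linarith [abs_lt.1 hr]
  have hexpand := ((summablePastOne_poch_div_factorial_mul_pow a hr).mul_kummerM ha x)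
    |>.hasSum_mul_kummerM ha y (hasSum_poch_mul_pow_mul_kummerM_mul_choose ha hr x)
  convert! hexpand using 1
  have hsum := (hasSum_pow_div_factorial_mul_kummerM ha (-(y * r / (1 - r))) (x / (1 - r))).mul_left
    ((1 - r) ^ (-a) * exp (-(x * r / (1 - r))))
  have hexp : exp (-((x + y) * r / (1 - r))) =
      exp (-(x * r / (1 - r))) * exp (-(y * r / (1 - r))) := by
    rw [← exp_add]
    congr 1
    ring
  have harg : x * y * r / (1 - r) ^ 2 = -(x / (1 - r) * -(y * r / (1 - r))) := by
    field_simp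
  rw [hexp, harg, ← mul_assoc, mul_assoc _ (exp _) (hyp0F1 _ _), ← hsum.tsum_eq]
  congr 1 with j
  have hpoch := (poch_pos ha j).ne'
  have hpow : (-(y * r / (1 - r))) ^ j = (-y) ^ j * r ^ j / (1 - r) ^ j := by
    rw [← mul_pow, ← div_pow, neg_mul, neg_div]
  rw [neg_add, rpow_add hr1, rpow_neg hr1.le (j : ℝ), rpow_natCast, hpow]
  field_simp

end GeneratingFunctions

section HilleHardy

variable {ν : ℝ}

lemma besselI_eq_mul_hyp0F1 (hν : -1 < ν) {z : ℝ} (hz : 0 < z) :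
    besselI ν z = (z / 2) ^ ν / Gamma (1 + ν) * hyp0F1 (1 + ν) ((z / 2) ^ 2) := by
  rw [besselI, hyp0F1, ← tsum_mul_left]
  congr 1 with m
  rw [show (m : ℝ) + ν + 1 = 1 + ν + m by ring, Gamma_add_natCast (by linarith),
    rpow_add (by positivity), ← pow_mul, ← rpow_natCast]
  push_cast
  ring

lemma hasSum_laguerreL_mul_laguerreL (hν : -1 < ν) {r : ℝ} (hr : |r| < 1) (x y : ℝ) :
    HasSum (fun k : ℕ => k ! / poch (1 + ν) k * r ^ k * (laguerreL ν k x * laguerreL ν k y))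
      ((1 - r) ^ (-(1 + ν)) * exp (-((x + y) * r / (1 - r))) *
        hyp0F1 (1 + ν) (x * y * r / (1 - r) ^ 2)) := by
  have ha : 0 < 1 + ν := by linarith
  refine (hasSum_poch_mul_pow_mul_kummerM_mul_kummerM ha hr x y).congr_fun fun k => ?_
  have hpoch := (poch_pos ha k).ne'
  rw [laguerreL, laguerreL]
  field_simp

lemma one_sub_exp_neg_two_mul (u : ℝ) : 1 - exp (-(2 * u)) = 2 * sinh u * exp (-u) := by
  have hsq : exp (-(2 * u)) = exp (-u) * exp (-u) := by rw [← exp_add]; congr 1; ring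
  have hinv : exp u * exp (-u) = 1 := by rw [← exp_add, add_neg_cancel, exp_zero]
  rw [sinh_eq, hsq]
  linear_combination -hinv

lemma exp_neg_two_mul_div_one_sub {u : ℝ} (hu : u ≠ 0) :
    exp (-(2 * u)) / (1 - exp (-(2 * u))) = (cosh u / sinh u - 1) / 2 := by
  have hsinh : sinh u ≠ 0 := sinh_ne_zero.2 hu
  rw [one_sub_exp_neg_two_mul, show -(2 * u) = -u + -u by ring, exp_add, ← cosh_sub_sinh u]
  have hexp : cosh u - sinh u ≠ 0 := by rw [cosh_sub_sinh]; positivity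
  field_simp

lemma exp_neg_two_mul_div_one_sub_sq (u : ℝ) :
    exp (-(2 * u)) / (1 - exp (-(2 * u))) ^ 2 = 1 / (2 * sinh u) ^ 2 := by
  rw [one_sub_exp_neg_two_mul, show -(2 * u) = -u + -u by ring, exp_add]
  field_simp

lemma hasSum_laguerreL_mul_laguerreL_besselI (hν : -1 < ν) {u x y : ℝ} (hu : 0 < u)
    (hxy : 0 < x * y) :
    HasSum (fun k : ℕ =>
        k ! / poch (1 + ν) k * exp (-(2 * u)) ^ k * (laguerreL ν k x * laguerreL ν k y))
      (Gamma (1 + ν) * exp ((1 + ν) * u) / (2 * sinh u) * √(x * y) ^ (-ν) *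
        exp ((x + y) / 2 * (1 - cosh u / sinh u)) * besselI ν (√(x * y) / sinh u)) := by
  have hr : |exp (-(2 * u))| < 1 := by
    rw [abs_exp, exp_lt_one_iff]
    linarith
  have hGamma : 0 < Gamma (1 + ν) := Gamma_pos_of_pos (by linarith)
  have hsqrt : 0 < √(x * y) := by positivity
  convert! hasSum_laguerreL_mul_laguerreL hν hr x y using 1
  have harg : x * y * exp (-(2 * u)) / (1 - exp (-(2 * u))) ^ 2 = (√(x * y) / sinh u / 2) ^ 2 := by
    rw [mul_div_assoc, exp_neg_two_mul_div_one_sub_sq, div_div, div_pow, sq_sqrt (by positivity)]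
    ring
  have hexp : -((x + y) * exp (-(2 * u)) / (1 - exp (-(2 * u)))) =
      (x + y) / 2 * (1 - cosh u / sinh u) := by
    rw [mul_div_assoc, exp_neg_two_mul_div_one_sub hu.ne']
    ring
  have hpow : (1 - exp (-(2 * u))) ^ (-(1 + ν)) =
      exp ((1 + ν) * u) / (2 * sinh u) * √(x * y) ^ (-ν) * (√(x * y) / sinh u / 2) ^ ν := by
    rw [one_sub_exp_neg_two_mul, mul_rpow (by positivity) (exp_pos _).le, ← exp_mul, div_div,
      div_rpow hsqrt.le (by positivity), rpow_neg hsqrt.le, neg_add, rpow_add (by positivity),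
      rpow_neg_one, rpow_neg (by positivity), mul_comm (sinh u) 2]
    field_simp
    congr 1
    ring
  rw [harg, hexp, hpow, besselI_eq_mul_hyp0F1 hν (by positivity)]
  field_simp

end HilleHardy

section HeatKernel

variable {ν ξ x x' : ℝ}

lemma PhiFun_mul_PhiFun (hν : -1 < ν) (hξ : 0 ≤ ξ) (hx : 0 ≤ x) (hx' : 0 ≤ x') (k : ℕ) :
    PhiFun ν ξ k x * PhiFun ν ξ k x' =
      2 * ξ ^ (1 + ν) / Gamma (1 + ν) * exp (-(ξ * (x ^ 2 + x' ^ 2) / 2)) *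
        (x * x') ^ (1 / 2 + ν) *
        (k ! / poch (1 + ν) k * (laguerreL ν k (ξ * x ^ 2) * laguerreL ν k (ξ * x' ^ 2))) := by
  have hGamma : 0 < Gamma (1 + ν) := Gamma_pos_of_pos (by linarith)
  have hpoch := poch_pos (show 0 < 1 + ν by linarith) k
  have hexp : exp (-(ξ * (x ^ 2 + x' ^ 2) / 2)) =
      exp (-ξ * x ^ 2 / 2) * exp (-ξ * x' ^ 2 / 2) := by
    rw [← exp_add]
    congr 1
    ring
  have hsqrt := mul_self_sqrt (show 0 ≤ 2 * ξ ^ (1 + ν) / Gamma (1 + ν) by positivity)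
  have hsqrt_k := mul_self_sqrt (show 0 ≤ (k ! : ℝ) / poch (1 + ν) k by positivity)
  rw [hexp, mul_rpow hx hx']
  calc PhiFun ν ξ k x * PhiFun ν ξ k x'
      = √(2 * ξ ^ (1 + ν) / Gamma (1 + ν)) * √(2 * ξ ^ (1 + ν) / Gamma (1 + ν)) *
          (exp (-ξ * x ^ 2 / 2) * exp (-ξ * x' ^ 2 / 2)) * (x ^ (1 / 2 + ν) * x' ^ (1 / 2 + ν)) *
          (√(k ! / poch (1 + ν) k) * √(k ! / poch (1 + ν) k) *
            (laguerreL ν k (ξ * x ^ 2) * laguerreL ν k (ξ * x' ^ 2))) := by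
        rw [PhiFun, PhiFun]
        ring
    _ = _ := by rw [hsqrt, hsqrt_k]

lemma exp_neg_eigenvalue_mul (ν ξ t : ℝ) (k : ℕ) :
    exp (-(ξ * (4 * k + 2 * (1 + ν)) * t)) =
      exp (-((1 + ν) * (2 * ξ * t))) * exp (-(2 * (2 * ξ * t))) ^ k := by
  rw [← exp_nat_mul, ← exp_add]
  congr 1
  ring

theorem heat_kernel_formula_general (hν : -1 < ν) (hξ : 0 < ξ) {t : ℝ} (ht : 0 < t)
    (hx : 0 < x) (hx' : 0 < x') :
    HasSum (fun k : ℕ => exp (-(ξ * (4 * k + 2 * (1 + ν)) * t)) * PhiFun ν ξ k x * PhiFun ν ξ k x')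
      (ξ * √(x * x') / sinh (2 * ξ * t) * besselI ν (ξ * x * x' / sinh (2 * ξ * t)) *
        exp (-(ξ / 2) * (x ^ 2 + x' ^ 2) * (cosh (2 * ξ * t) / sinh (2 * ξ * t)))) := by
  have hGamma : 0 < Gamma (1 + ν) := Gamma_pos_of_pos (by linarith)
  have hsqrt : √(ξ * x ^ 2 * (ξ * x' ^ 2)) = ξ * (x * x') := by
    rw [show ξ * x ^ 2 * (ξ * x' ^ 2) = (ξ * (x * x')) ^ 2 by ring, sqrt_sq (by positivity)]
  have hHilleHardy := hasSum_laguerreL_mul_laguerreL_besselI hν (u := 2 * ξ * t)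
    (x := ξ * x ^ 2) (y := ξ * x' ^ 2) (by positivity) (by positivity)
  have hpow : ξ ^ (1 + ν) * (x * x') ^ (1 / 2 + ν) * (ξ * (x * x')) ^ (-ν) = ξ * √(x * x') := by
    rw [rpow_neg (by positivity), mul_rpow hξ.le (by positivity), rpow_add hξ,
      rpow_add (by positivity), sqrt_eq_rpow, rpow_one]
    field_simp
  have hexp : exp (-(ξ / 2) * (x ^ 2 + x' ^ 2) * (cosh (2 * ξ * t) / sinh (2 * ξ * t))) =
      exp (-((1 + ν) * (2 * ξ * t))) * exp ((1 + ν) * (2 * ξ * t)) *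
        exp (-(ξ * (x ^ 2 + x' ^ 2) / 2)) * exp ((ξ * x ^ 2 + ξ * x' ^ 2) / 2 *
          (1 - cosh (2 * ξ * t) / sinh (2 * ξ * t))) := by
    simp only [← exp_add]
    congr 1
    ring
  rw [hsqrt] at hHilleHardy
  convert! hHilleHardy.mul_left (exp (-((1 + ν) * (2 * ξ * t))) * (2 * ξ ^ (1 + ν) / Gamma (1 + ν) *
    exp (-(ξ * (x ^ 2 + x' ^ 2) / 2)) * (x * x') ^ (1 / 2 + ν))) using 1
  · ext k
    rw [mul_assoc, PhiFun_mul_PhiFun hν hξ.le hx.le hx'.le, exp_neg_eigenvalue_mul]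
    ring
  · rw [hexp, ← hpow, mul_assoc ξ x x']
    field_simp

end HeatKernel

/-- Mehler-type formula: for `ν, ξ, t, x, x' > 0` the heat-kernel series
`∑_k e^{−ξ(4k+2(1+ν))t} Φ_{ξ,k}(x)Φ_{ξ,k}(x')` converges, with sum
`(ξ√(xx')/sinh(2ξt)) I_ν(ξxx'/sinh(2ξt)) exp(−(ξ/2)(x²+x'²) coth(2ξt))`. -/
theorem heat_kernel_formula (ν ξ t x x' : ℝ) (hν : 0 < ν) (hξ : 0 < ξ) (ht : 0 < t)
    (hx : 0 < x) (hx' : 0 < x') :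
    Summable (fun k : ℕ =>
      Real.exp (-(ξ * (4 * (k : ℝ) + 2 * (1 + ν)) * t)) * PhiFun ν ξ k x * PhiFun ν ξ k x') ∧
    ∑' k : ℕ,
        Real.exp (-(ξ * (4 * (k : ℝ) + 2 * (1 + ν)) * t)) * PhiFun ν ξ k x * PhiFun ν ξ k x'
      = ξ * Real.sqrt (x * x') / Real.sinh (2 * ξ * t) *
          besselI ν (ξ * x * x' / Real.sinh (2 * ξ * t)) *
          Real.exp (-(ξ / 2) * (x ^ 2 + x' ^ 2) *
            (Real.cosh (2 * ξ * t) / Real.sinh (2 * ξ * t))) := by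
  have h := heat_kernel_formula_general (by linarith : -1 < ν) hξ ht hx hx'
  exact ⟨h.summable, h.tsum_eq⟩
end
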